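/- arXiv:2601.14158 — 2 statements merged into one kernel-verified Lean document; each statement's English description precedes it below -/
import Mathlib

section
/- Let 3 ≤ d < 24 and let C be a positive semidefinite matrix on ℂ^d⊗ℂ^d of rank r whose spectrum is (λ, …, λ, 0, …, 0) with exactly r copies of some λ > 0. If for every unitary U on ℂ^d⊗ℂ^d there exists a diagonal matrix D whose diagonal entries are a permutation of the eigenvalues of C (with multiplicity) with λ(tr_1[UCU*]) ⊕ λ(tr_2[UCU*]) ≺ λ(tr_1[D]) ⊕ λ(tr_2[D]), then one of the following holds: (i) r ≤ 3; (ii) r ≥ d² − 3; (iii) r = t·d for some 2 ≤ t ≤ d − 2. -/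
open Matrix Finset Kronecker
open scoped ComplexOrder

/-- The first partial trace of a matrix on `ℂ^{d1} ⊗ ℂ^{d2}` (index pairs `(i,s)` ordered
lexicographically): `(tr_1 C)_{s,t} = ∑_i C_{(i,s),(i,t)}`. -/
noncomputable def ptrace1 {d1 d2 : ℕ} (C : Matrix (Fin d1 × Fin d2) (Fin d1 × Fin d2) ℂ) :
    Matrix (Fin d2) (Fin d2) ℂ :=
  Matrix.of fun s t => ∑ i : Fin d1, C (i, s) (i, t)

/-- The second partial trace: `(tr_2 C)_{i,j} = ∑_s C_{(i,s),(j,s)}`. -/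
noncomputable def ptrace2 {d1 d2 : ℕ} (C : Matrix (Fin d1 × Fin d2) (Fin d1 × Fin d2) ℂ) :
    Matrix (Fin d1) (Fin d1) ℂ :=
  Matrix.of fun i j => ∑ s : Fin d2, C (i, s) (j, s)

/-- The sum of the `k` largest entries of the vector `x` (the largest value of a sum of `k`
entries of `x`), i.e. `∑_{i=1}^k x_i^↓`. -/
noncomputable def maxSum {ι : Type*} [Fintype ι] (x : ι → ℝ) (k : ℕ) : ℝ :=
  sSup {s : ℝ | ∃ A : Finset ι, A.card = k ∧ s = ∑ i ∈ A, x i}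

/-- `x ≺ y` (majorization): for every `k`, the sum of the `k` largest entries of `x` is at
most the sum of the `k` largest entries of `y`, and the total sums are equal. -/
def Majorizes {ι κ : Type*} [Fintype ι] [Fintype κ] (x : ι → ℝ) (y : κ → ℝ) : Prop :=
  (∀ k : ℕ, maxSum x k ≤ maxSum y k) ∧ ∑ i, x i = ∑ j, y j

/-- `x ≺_w y` (weak majorization). -/
def WeakMajorizes {ι κ : Type*} [Fintype ι] [Fintype κ] (x : ι → ℝ) (y : κ → ℝ) : Prop :=
  ∀ k : ℕ, maxSum x k ≤ maxSum y k


def wsum {d : ℕ} (T : Finset (Fin d × Fin d)) (R K : Finset (Fin d)) : ℕ :=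
  (T.filter (fun c => c.1 ∈ R)).card + (T.filter (fun c => c.2 ∈ K)).card

/-- weight of a cell -/
def wt {d : ℕ} (c : Fin d × Fin d) (R K : Finset (Fin d)) : ℕ :=
  (if c.1 ∈ R then 1 else 0) + (if c.2 ∈ K then 1 else 0)

def QProp (d r : ℕ) : Prop :=
  ∀ (S : Finset (Fin d × Fin d)) (p q : Fin d × Fin d), p ∉ S → q ∉ S → p.1 ≠ q.1 → p.2 ≠ q.2 →
    S.card + 1 = r → ∃ T : Finset (Fin d × Fin d), T.card = r ∧
      ∀ R K : Finset (Fin d), ∃ R' K' : Finset (Fin d), R'.card + K'.card = R.card + K.card ∧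
        2 * wsum S R K + wt p R K + wt q R K ≤ 2 * wsum T R' K'

theorem wsum_le {d : ℕ} (T : Finset (Fin d × Fin d)) (R K : Finset (Fin d)) :
    wsum T R K = (T.filter (fun c => c.1 ∈ R ∨ c.2 ∈ K)).card + (T.filter (fun c => c ∈ R ×ˢ K)).card := by
  unfold wsum
  rw [← Finset.card_union_add_card_inter]
  congr 2
  · ext c; simp; tauto
  · ext c; simp; tauto

theorem wsum_union {d : ℕ} (S T : Finset (Fin d × Fin d)) (h : Disjoint S T) (R K : Finset (Fin d)) :
    wsum (S ∪ T) R K = wsum S R K + wsum T R K := by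
  unfold wsum
  rw [filter_union, filter_union, card_union_of_disjoint, card_union_of_disjoint]
  · ring
  · exact disjoint_filter_filter h
  · exact disjoint_filter_filter h

theorem wsum_eq_sum {d : ℕ} (T : Finset (Fin d × Fin d)) (R K : Finset (Fin d)) :
    wsum T R K = ∑ c ∈ T, wt c R K := by
  unfold wsum wt
  rw [sum_add_distrib, card_filter, card_filter]

theorem row_bound {d : ℕ} (T : Finset (Fin d × Fin d)) (R' K' R K : Finset (Fin d)) (b : ℕ)
    (hR : R.card ≤ b) (hK : K.card ≤ b) (hsub : ∀ c ∈ T, c.1 ∈ R ∨ c.2 ∈ K) :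
    wsum T R' K' ≤ (R'.card + K'.card) * b + (T \ (R ×ˢ K)).card := by
  unfold wsum
  have h1 : (T.filter (fun c => c.1 ∈ R')) ⊆
      (R' ×ˢ K) ∪ (T \ (R ×ˢ K)).filter (fun c => c.2 ∉ K) := by
    intro c hc
    simp at hc ⊢
    have := hsub c hc.1
    tauto
  have h2 : (T.filter (fun c => c.2 ∈ K')) ⊆
      (R ×ˢ K') ∪ (T \ (R ×ˢ K)).filter (fun c => ¬ c.2 ∉ K) := by
    intro c hc
    simp at hc ⊢
    have := hsub c hc.1
    tauto
  have e := card_filter_add_card_filter_not (s := T \ (R ×ˢ K)) (fun c => c.2 ∉ K)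
  have i1 := (card_le_card h1).trans (card_union_le _ _)
  have i2 := (card_le_card h2).trans (card_union_le _ _)
  rw [card_product] at i1 i2
  nlinarith [Nat.mul_le_mul_left R'.card hK, Nat.mul_le_mul_right K'.card hR]

theorem optimal_block {d : ℕ} (T : Finset (Fin d × Fin d)) (R K : Finset (Fin d)) (a b : ℕ)
    (hab : a ≤ b) (hba : b ≤ a + 1) (hc : R.card + K.card = a + b)
    (h : T.card + a * b ≤ wsum T R K) :
    R.card ≤ b ∧ K.card ≤ b ∧ (∀ c ∈ T, c.1 ∈ R ∨ c.2 ∈ K) ∧ (T \ (R ×ˢ K)).card + a * b = T.card := by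
  rw [wsum_le] at h
  have h1 := card_filter_le T (fun c => c.1 ∈ R ∨ c.2 ∈ K)
  have h2 : (T.filter (fun c => c ∈ R ×ˢ K)).card ≤ R.card * K.card := by
    rw [← card_product]; apply card_le_card; intro c hc; simp at hc ⊢; tauto
  have h3 : R.card * K.card ≤ a * b := by
    generalize R.card = x at *
    generalize K.card = y at *
    have : (x:ℤ) + y = a + b := by exact_mod_cast hc
    zify
    have hy : (y:ℤ) = a + b - x := by linarith
    rw [hy]
    have : b = a ∨ b = a + 1 := by omega
    rcases this with h | h
    · subst h; nlinarith [sq_nonneg ((x:ℤ) - b)]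
    · subst h; push_cast
      rcases le_or_gt (x:ℤ) a with h | h <;> nlinarith
  have h4 : (T.filter (fun c => c ∈ R ×ˢ K)).card = a * b := by omega
  have h5 : R.card * K.card = a * b := by omega
  have h6 : (T.filter (fun c => c.1 ∈ R ∨ c.2 ∈ K)).card = T.card := by omega
  refine ⟨?_, ?_, ?_, ?_⟩
  · by_contra hh
    push Not at hh
    zify at *
    nlinarith
  · by_contra hh
    push Not at hh
    zify at *
    nlinarith
  · intro c hc
    have := filter_card_eq h6
    exact this c hc
  · rw [← h4, filter_mem_eq_inter, card_sdiff_add_card_inter]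

theorem generic {d r : ℕ} (a b j e : ℕ) (hab : a ≤ b) (hba : b ≤ a + 1) (hbd : b ≤ d) (hja : j < a)
    (he : e < j * (d - b)) (hr : r = a * b + e) : ¬ QProp d r := by
  intro hQ
  obtain ⟨R, -, hR⟩ := exists_subset_card_eq (s := (univ : Finset (Fin d))) (n := a) (by simp; omega)
  obtain ⟨K, -, hK⟩ := exists_subset_card_eq (s := (univ : Finset (Fin d))) (n := b) (by simp; omega)
  obtain ⟨J, hJR, hJ⟩ := exists_subset_card_eq (s := R) (n := j) (by omega)
  have hN : (J ×ˢ Kᶜ).card = j * (d - b) := by simp [card_product, hJ, card_compl, hK]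
  obtain ⟨E, hEN, hE⟩ := exists_subset_card_eq (s := J ×ˢ Kᶜ) (n := e) (by omega)
  obtain ⟨q, hqN, hqE⟩ := exists_mem_notMem_of_card_lt_card (s := E) (t := J ×ˢ Kᶜ) (by omega)
  obtain ⟨i, hiR, hiJ⟩ := exists_mem_notMem_of_card_lt_card (s := J) (t := R) (by omega)
  have hb : 0 < K.card := by omega
  obtain ⟨s, hs⟩ := card_pos.1 hb
  have hE' : ∀ c ∈ E, c.1 ∈ J ∧ c.2 ∉ K := fun c hc => by simpa using hEN hc
  have hq : q.1 ∈ J ∧ q.2 ∉ K := by simpa using hqN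
  have hdisj : Disjoint ((R ×ˢ K).erase (i, s)) E := by
    rw [disjoint_left]; intro c hc hcE
    have := hE' c hcE
    simp at hc; tauto
  have hiSmem : (i, s) ∈ R ×ˢ K := by simp [hiR, hs]
  have hcard : ((R ×ˢ K).erase (i, s)).card + 1 = a * b := by
    rw [card_erase_add_one hiSmem, card_product, hR, hK]
  obtain ⟨T, hT, hTm⟩ := hQ ((R ×ˢ K).erase (i, s) ∪ E) (i, s) q
    (by simp; intro h; exact hiJ (hE' _ h).1) (by simp [hqE, hq.2])
    (by intro h; simp at h; exact hiJ (h ▸ hq.1)) (by intro h; simp at h; exact hq.2 (h ▸ hs))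
    (by rw [card_union_of_disjoint hdisj, hE]; omega)
  obtain ⟨R1, K1, hc1, h1⟩ := hTm R K
  obtain ⟨R2, K2, hc2, h2⟩ := hTm J ∅
  rw [wsum_union _ _ hdisj] at h1 h2
  have e1 : wsum ((R ×ˢ K).erase (i, s)) R K = 2 * ((R ×ˢ K).erase (i, s)).card := by
    rw [wsum_eq_sum, sum_const_nat (m := 2), mul_comm]
    intro c hc; simp at hc; simp [wt, hc]
  have e2 : wsum E R K = e := by
    rw [wsum_eq_sum, sum_const_nat (m := 1), mul_one, hE]
    intro c hc; simp [wt, hE' c hc, hJR (hE' c hc).1]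
  have e3 : wsum E J ∅ = e := by
    rw [wsum_eq_sum, sum_const_nat (m := 1), mul_one, hE]
    intro c hc; simp [wt, hE' c hc]
  have e4 : wsum ((R ×ˢ K).erase (i, s)) J ∅ = j * b := by
    rw [← hJ, ← hK, ← card_product]
    simp only [wsum, notMem_empty, filter_false, card_empty, add_zero]
    congr 1
    ext c
    simp
    constructor
    · tauto
    · intro h
      refine ⟨⟨?_, hJR h.1, h.2⟩, h.1⟩
      rintro rfl
      exact hiJ h.1
  have e5 : wt (i, s) R K = 2 := by simp [wt, hiR, hs]
  have e6 : wt q R K = 1 := by simp [wt, hJR hq.1, hq.2]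
  have e7 : wt q J ∅ = 1 := by simp [wt, hq.1]
  rw [e1, e2, e5, e6] at h1
  rw [e3, e4, e7] at h2
  obtain ⟨o1, o2, o3, o4⟩ := optimal_block T R1 K1 a b hab hba (by omega) (by omega)
  have := row_bound T R2 K2 R1 K1 b o1 o2 o3
  rw [hc2, hJ] at this
  simp only [card_empty, add_zero] at this
  omega

theorem case_5_8 : ¬ QProp 5 8 := by
  intro hQ
  obtain ⟨T, hT, hTm⟩ := hQ {(0,0),(0,1),(0,2),(0,3),(1,1),(1,2),(1,3)} (1,0) (0,4)
    (by decide) (by decide) (by decide) (by decide) (by decide)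
  obtain ⟨R1, K1, hc1, h1⟩ := hTm {0,1} {0,1,2,3}
  obtain ⟨R2, K2, hc2, h2⟩ := hTm {0} ∅
  have e1 : wsum (d := 5) {(0,0),(0,1),(0,2),(0,3),(1,1),(1,2),(1,3)} {0,1} {0,1,2,3} = 14 := by decide
  have e2 : wsum (d := 5) {(0,0),(0,1),(0,2),(0,3),(1,1),(1,2),(1,3)} {0} ∅ = 4 := by decide
  have e3 : wt (d := 5) (1,0) {0,1} {0,1,2,3} = 2 := by decide
  have e4 : wt (d := 5) (0,4) {0,1} {0,1,2,3} = 1 := by decide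
  have e5 : wt (d := 5) (0,4) {0} ∅ = 1 := by decide
  have hcc : R1.card + K1.card = 6 := by rw [hc1]; decide
  have hcd : R2.card + K2.card = 1 := by rw [hc2]; decide
  rw [e1, e3, e4] at h1
  rw [e2, e5] at h2
  rw [wsum_le] at h1
  have i1 := card_filter_le T (fun c => c.1 ∈ R1 ∨ c.2 ∈ K1)
  have i2 := card_filter_le T (fun c => c ∈ R1 ×ˢ K1)
  have hsub : ∀ c ∈ T, c ∈ R1 ×ˢ K1 := fun c hc => (filter_card_eq (by omega : (T.filter (fun c => c ∈ R1 ×ˢ K1)).card = T.card)) c hc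
  have h3 : 8 ≤ R1.card * K1.card := by rw [← card_product, ← hT]; exact card_le_card hsub
  have h4 : R1.card ≤ 4 ∧ K1.card ≤ 4 := by
    generalize R1.card = x at *
    generalize K1.card = y at *
    have : x ≤ 6 := by omega
    obtain rfl : y = 6 - x := by omega
    interval_cases x <;> omega
  have i3 : (T.filter (fun c => c.1 ∈ R2)).card ≤ R2.card * K1.card := by
    rw [← card_product]; apply card_le_card; intro c hc; simp at hc ⊢
    have := hsub c hc.1; simp at this; tauto
  have i4 : (T.filter (fun c => c.2 ∈ K2)).card ≤ R1.card * K2.card := by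
    rw [← card_product]; apply card_le_card; intro c hc; simp at hc ⊢
    have := hsub c hc.1; simp at this; tauto
  unfold wsum at h2
  nlinarith [h4.1, h4.2]

theorem case_4_7 : ¬ QProp 4 7 := by
  intro hQ
  obtain ⟨T, hT, hTm⟩ := hQ {(0,0),(0,1),(0,2),(0,3),(1,0),(2,0)} (1,1) (3,0)
    (by decide) (by decide) (by decide) (by decide) (by decide)
  obtain ⟨R1, K1, hc1, h1⟩ := hTm {0} {0}
  obtain ⟨R2, K2, hc2, h2⟩ := hTm {0,1} {0,1}
  have e1 : 2 * wsum (d := 4) {(0,0),(0,1),(0,2),(0,3),(1,0),(2,0)} {0} {0} + wt (d := 4) (1,1) {0} {0} + wt (d := 4) (3,0) {0} {0} = 15 := by decide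
  have e2 : 2 * wsum (d := 4) {(0,0),(0,1),(0,2),(0,3),(1,0),(2,0)} {0,1} {0,1} + wt (d := 4) (1,1) {0,1} {0,1} + wt (d := 4) (3,0) {0,1} {0,1} = 21 := by decide
  have hcc : R1.card + K1.card = 2 := by rw [hc1]; decide
  have hcd : R2.card + K2.card = 4 := by rw [hc2]; decide
  rw [e1] at h1
  rw [e2] at h2
  obtain ⟨o1, o2, o3, o4⟩ := optimal_block T R1 K1 1 1 le_rfl (by omega) (by omega) (by omega)
  have := row_bound T R2 K2 R1 K1 1 o1 o2 o3
  rw [hcd] at this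
  omega

def chk (d r : ℕ) : Bool := (List.range 24).any fun a => (List.range 2).any fun δ =>
  decide (a + δ ≤ d) && decide (0 < a) && decide (a * (a + δ) ≤ r) && decide (r - a * (a + δ) < (a - 1) * (d - (a + δ)))

theorem arith0 : ∀ d < 24, ∀ r < 600, 
    (decide (4 ≤ r) && decide (2 * r ≤ d * d) && decide (3 ≤ d) && !decide (d = 5 ∧ r = 8) && !decide (d = 4 ∧ (r = 7 ∨ r = 8))) = true →
     chk d r = true := by
  decide +kernel

theorem arith (d : ℕ) (hd : d < 24) (r : ℕ) (h4 : 4 ≤ r) (h2 : 2 * r ≤ d * d) (h3 : 3 ≤ d) :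
    (d = 5 ∧ r = 8) ∨ (d = 4 ∧ (r = 7 ∨ r = 8)) ∨
    ∃ a < 24, ∃ δ < 2, a + δ ≤ d ∧ 0 < a ∧ a * (a + δ) ≤ r ∧ r - a * (a + δ) < (a - 1) * (d - (a + δ)) := by
  have := arith0 d hd r (by nlinarith)
  by_cases h5 : d = 5 ∧ r = 8
  · exact Or.inl h5
  by_cases h6 : d = 4 ∧ (r = 7 ∨ r = 8)
  · exact Or.inr (Or.inl h6)
  have := this (by simp only [h4, h2, h3, h5, h6]; decide)
  simp only [chk, List.any_eq_true, List.mem_range, Bool.and_eq_true, decide_eq_true_eq] at this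
  obtain ⟨a, ha, δ, hδ, ⟨⟨h7, h8⟩, h9⟩, h10⟩ := this
  exact Or.inr (Or.inr ⟨a, ha, δ, hδ, h7, h8, h9, h10⟩)

theorem lower (d r : ℕ) (h : d < 24) (h3 : 3 ≤ d) (h4 : 4 ≤ r) (h2 : 2 * r ≤ d * d) (hQ : QProp d r) :
    d = 4 ∧ r = 8 := by
  rcases arith d h r h4 h2 h3 with ⟨rfl, rfl⟩ | ⟨rfl, rfl | rfl⟩ | ⟨a, -, δ, hδ, h5, h6, h7, h8⟩
  · exact absurd hQ case_5_8
  · exact absurd hQ case_4_7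
  · simp
  · exact absurd hQ (generic a (a + δ) (a - 1) (r - a * (a + δ)) (by omega) (by omega) h5 (by omega) h8 (by omega))

theorem wsum_compl {d : ℕ} (T : Finset (Fin d × Fin d)) (R K : Finset (Fin d)) :
    wsum T R K + wsum Tᶜ R K = (R.card + K.card) * d := by
  have e := wsum_union T Tᶜ disjoint_compl_right R K
  rw [← e, union_compl]
  unfold wsum
  have h1 : (univ : Finset (Fin d × Fin d)).filter (fun c => c.1 ∈ R) = R ×ˢ univ := by ext; simp
  have h2 : (univ : Finset (Fin d × Fin d)).filter (fun c => c.2 ∈ K) = univ ×ˢ K := by ext; simp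
  rw [h1, h2, card_product, card_product]; simp; ring

theorem wsum_compl' {d : ℕ} (T : Finset (Fin d × Fin d)) (R K : Finset (Fin d)) :
    wsum T R K + wsum T Rᶜ Kᶜ = 2 * T.card := by
  rw [wsum_eq_sum, wsum_eq_sum, ← sum_add_distrib, sum_const_nat (m := 2), mul_comm]
  intro c _
  unfold wt; simp only [mem_compl]; split_ifs <;> simp

theorem wt_eq {d : ℕ} (p) (R K : Finset (Fin d)) : wt p R K = wsum {p} R K := by
  simp [wsum_eq_sum]

theorem QProp_compl {d r : ℕ} (hr : r ≤ d * d) (hQ : QProp d r) : QProp d (d * d - r) := by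
  intro S p q hp hq h1 h2 hc
  have hpq : p ≠ q := fun h => h1 (h ▸ rfl)
  have hcard : (insert p (insert q S)).card = S.card + 2 := by
    rw [card_insert_of_notMem (by simp [hpq, hp]), card_insert_of_notMem hq]
  have hcc := card_add_card_compl (insert p (insert q S))
  simp only [Fintype.card_prod, Fintype.card_fin] at hcc
  obtain ⟨T, hT, hTm⟩ := hQ (insert p (insert q S))ᶜ p q (by simp) (by simp) h1 h2 (by omega)
  have hTc := card_add_card_compl T
  simp only [Fintype.card_prod, Fintype.card_fin] at hTc
  refine ⟨Tᶜ, by omega, fun R K => ?_⟩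
  obtain ⟨R', K', hc', h⟩ := hTm Rᶜ Kᶜ
  have c1 := card_add_card_compl R
  have c2 := card_add_card_compl K
  have c3 := card_add_card_compl R'
  have c4 := card_add_card_compl K'
  refine ⟨R'ᶜ, K'ᶜ, by omega, ?_⟩
  have hu : wsum (insert p (insert q S)) R K = wt p R K + (wt q R K + wsum S R K) := by
    rw [wsum_eq_sum, wsum_eq_sum, sum_insert (by simp [hpq, hp]), sum_insert hq]
  have u1 := wsum_compl (insert p (insert q S)) R K
  have u2 := wsum_compl T R'ᶜ K'ᶜ
  have u3 := wsum_compl' T R' K'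
  have u4 := wsum_compl' (insert p (insert q S))ᶜ R K
  have u5 := wsum_compl' {p} R K
  have u6 := wsum_compl' {q} R K
  rw [← wt_eq, ← wt_eq, card_singleton] at u5 u6
  have : R'ᶜ.card + K'ᶜ.card = R.card + K.card := by omega
  rw [this] at u2
  omega

theorem combin (d r : ℕ) (h : d < 24) (h3 : 3 ≤ d) (hr : r ≤ d * d) (hQ : QProp d r) :
    r ≤ 3 ∨ d * d - 3 ≤ r ∨ ∃ t : ℕ, 2 ≤ t ∧ t ≤ d - 2 ∧ r = t * d := by
  by_contra hcon
  push Not at hcon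
  obtain ⟨n1, n2, n3⟩ := hcon
  have : d = 4 ∧ r = 8 := by
    rcases le_total (2 * r) (d * d) with hh | hh
    · exact lower d r h h3 (by omega) hh hQ
    · have := lower d (d * d - r) h h3 (by omega) (by omega) (QProp_compl hr hQ)
      obtain ⟨rfl, h⟩ := this
      omega
  obtain ⟨rfl, rfl⟩ := this
  exact n3 2 (by omega) (by omega) (by omega)

theorem eig_diag {n : Type*} [Fintype n] [DecidableEq n] (M : Matrix n n ℂ) (f : n → ℝ)
    (hM : M = diagonal (fun i => (f i : ℂ))) (h : M.IsHermitian) :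
    ∃ σ : Equiv.Perm n, ∀ i, h.eigenvalues i = f (σ i) := by
  have h1 := h.roots_charpoly_eq_eigenvalues
  have h2 : M.charpoly.roots = Multiset.map (fun i => (f i : ℂ)) univ.val := by
    rw [hM, charpoly_diagonal, Polynomial.roots_prod]
    · simp
    · simp [Finset.prod_ne_zero_iff, Polynomial.X_sub_C_ne_zero]
  have h3 : Multiset.map h.eigenvalues univ.val = Multiset.map f univ.val := by
    have := congrArg (Multiset.map Complex.re) (h1.symm.trans h2)
    simpa [Multiset.map_map, Function.comp_def] using this
  have h4 : ∀ c : ℝ, Nonempty ({a // h.eigenvalues a = c} ≃ {a // f a = c}) := by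
    intro c
    have := congrArg (Multiset.count c) h3
    rw [Multiset.count_map, Multiset.count_map] at this
    apply Fintype.card_eq.1
    rw [Fintype.card_subtype, Fintype.card_subtype]
    simpa [Finset.card, eq_comm] using this
  have e := fun c => (h4 c).some
  exact ⟨Equiv.ofFiberEquiv e, fun i => (Equiv.ofFiberEquiv_map e i).symm⟩

theorem maxSum_set_finite {ι : Type*} [Fintype ι] (x : ι → ℝ) (k : ℕ) :
    {s : ℝ | ∃ A : Finset ι, A.card = k ∧ s = ∑ i ∈ A, x i}.Finite := by
  apply (Set.finite_range (fun A : Finset ι => ∑ i ∈ A, x i)).subset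
  rintro s ⟨A, -, rfl⟩
  exact ⟨A, rfl⟩

theorem le_maxSum {ι : Type*} [Fintype ι] (x : ι → ℝ) (A : Finset ι) :
    ∑ i ∈ A, x i ≤ maxSum x A.card :=
  le_csSup (maxSum_set_finite x _).bddAbove ⟨A, rfl, rfl⟩

theorem exists_maxSum {ι : Type*} [Fintype ι] (x : ι → ℝ) (A0 : Finset ι) :
    ∃ B : Finset ι, B.card = A0.card ∧ maxSum x A0.card = ∑ i ∈ B, x i := by
  have : maxSum x A0.card ∈ {s : ℝ | ∃ A : Finset ι, A.card = A0.card ∧ s = ∑ i ∈ A, x i} :=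
    Set.Nonempty.csSup_mem ⟨_, A0, rfl, rfl⟩ (maxSum_set_finite x _)
  exact this

/-- the vector of column sums and row sums -/
def lineVec {d : ℕ} (w : Fin d × Fin d → ℝ) : Fin d ⊕ Fin d → ℝ :=
  Sum.elim (fun s => ∑ i, w (i, s)) (fun i => ∑ s, w (i, s))

theorem lineVec_sum {d : ℕ} (w : Fin d × Fin d → ℝ) (B : Finset (Fin d ⊕ Fin d)) :
    ∑ i ∈ B, lineVec w i = ∑ c, w c * (wt c B.toRight B.toLeft : ℝ) := by
  rw [← Finset.toLeft_disjSum_toRight (u := B), Finset.sum_disjSum]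
  simp only [lineVec, Sum.elim_inl, Sum.elim_inr, wt, Finset.toLeft_disjSum, Finset.toRight_disjSum]
  push_cast
  simp only [mul_add, sum_add_distrib, mul_ite, mul_one, mul_zero]
  rw [add_comm]
  generalize B.toRight = R
  generalize B.toLeft = K
  congr 1
  · rw [Fintype.sum_prod_type]
    rw [← Finset.sum_filter_of_ne (s := univ) (p := fun i => i ∈ R), Finset.filter_univ_mem]
    · apply sum_congr rfl; intro i hi; simp [hi]
    · intro i _ h; by_contra hi; simp [hi] at h
  · rw [Fintype.sum_prod_type_right]
    rw [← Finset.sum_filter_of_ne (s := univ) (p := fun i => i ∈ K), Finset.filter_univ_mem]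
    · apply sum_congr rfl; intro i hi; simp [hi]
    · intro i _ h; by_contra hi; simp [hi] at h

theorem eig_line {d : ℕ} (M : Matrix (Fin d × Fin d) (Fin d × Fin d) ℂ) (w : Fin d × Fin d → ℝ)
    (hw : ∀ c, M c c = (w c : ℂ)) (ho1 : ∀ i s t, s ≠ t → M (i, s) (i, t) = 0)
    (ho2 : ∀ i j s, i ≠ j → M (i, s) (j, s) = 0)
    (h1 : (ptrace1 M).IsHermitian) (h2 : (ptrace2 M).IsHermitian) :
    ∃ e : Equiv.Perm (Fin d ⊕ Fin d), ∀ x, Sum.elim h1.eigenvalues h2.eigenvalues x = lineVec w (e x) := by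
  obtain ⟨σ1, hσ1⟩ := eig_diag (ptrace1 M) (fun s => ∑ i, w (i, s)) (by
    ext s t
    by_cases h : s = t
    · subst h; simp [ptrace1, hw]
    · simp [ptrace1, h, ho1]) h1
  obtain ⟨σ2, hσ2⟩ := eig_diag (ptrace2 M) (fun i => ∑ s, w (i, s)) (by
    ext s t
    by_cases h : s = t
    · subst h; simp [ptrace2, hw]
    · simp [ptrace2, h, ho2]) h2
  refine ⟨Equiv.sumCongr σ1 σ2, ?_⟩
  rintro (x | x)
  · simp [hσ1, lineVec]
  · simp [hσ2, lineVec]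

theorem ptrace_herm {d : ℕ} (M : Matrix (Fin d × Fin d) (Fin d × Fin d) ℂ) (h : M.IsHermitian) :
    (ptrace1 M).IsHermitian ∧ (ptrace2 M).IsHermitian := by
  constructor
  · ext s t; simp [ptrace1, ← h.apply (_, s) (_, t)]
  · ext s t; simp [ptrace2, ← h.apply (s, _) (t, _)]

/-- the rotation mixing the cells `p` and `q` -/
noncomputable def rot {n : Type*} [DecidableEq n] (p q : n) : Matrix n n ℂ :=
  Matrix.of fun x y => if y = p then ((√2 : ℝ) : ℂ)⁻¹ * ((if x = p then 1 else 0) + (if x = q then 1 else 0))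
    else if y = q then ((√2 : ℝ) : ℂ)⁻¹ * ((if x = p then 1 else 0) - (if x = q then 1 else 0))
    else if x = y then 1 else 0

theorem sqrt2_inv : ((√2 : ℝ) : ℂ)⁻¹ * ((√2 : ℝ) : ℂ)⁻¹ = 1 / 2 := by
  rw [← mul_inv, ← Complex.ofReal_mul, Real.mul_self_sqrt (by norm_num)]; norm_num

theorem rot_unitary {n : Type*} [Fintype n] [DecidableEq n] (p q : n) (h : p ≠ q) :
    (rot p q)ᴴ * rot p q = 1 := by
  ext y z
  rw [mul_apply]
  have hs := sqrt2_inv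
  generalize hc : ((√2 : ℝ) : ℂ)⁻¹ = a at hs
  have hca : (starRingEnd ℂ) a = a := by rw [← hc]; simp
  simp only [conjTranspose_apply, rot, of_apply, hc]
  by_cases hyp : y = p <;> by_cases hyq : y = q <;> by_cases hzp : z = p <;> by_cases hzq : z = q <;>
    simp [hyp, hyq, hzp, hzq, h, h.symm, hca, one_apply, mul_add, add_mul, mul_sub, sub_mul, sum_add_distrib, sum_sub_distrib]
    <;> grind

theorem rot_conj {n : Type*} [Fintype n] [DecidableEq n] (p q : n) (h : p ≠ q) (S : Finset n)
    (hp : p ∉ S) (hq : q ∉ S) (l : ℂ) (x y : n) :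
    (rot p q * diagonal (fun c => if c ∈ insert p S then l else 0) * (rot p q)ᴴ) x y =
      l * (1 / 2 * ((if x = p then 1 else 0) + (if x = q then 1 else 0)) *
        ((if y = p then 1 else 0) + (if y = q then 1 else 0)) + if x = y ∧ x ∈ S then 1 else 0) := by
  rw [mul_apply]
  simp only [mul_diagonal]
  have hs := sqrt2_inv
  have : ∀ c : n, rot p q x c * (if c ∈ insert p S then l else 0) * (rot p q)ᴴ c y =
      (if c = p then l * (1 / 2 * ((if x = p then 1 else 0) + (if x = q then 1 else 0)) *
        ((if y = p then 1 else 0) + (if y = q then 1 else 0))) else 0) +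
      (if c = x then (if x = y ∧ x ∈ S then l else 0) else 0) := by
    intro c
    generalize hc : ((√2 : ℝ) : ℂ)⁻¹ = a at hs
    have hca : (starRingEnd ℂ) a = a := by rw [← hc]; simp
    simp only [conjTranspose_apply, rot, of_apply, hc]
    by_cases hcp : c = p
    · subst hcp
      have : ¬ (c = x ∧ x ∈ S) := by rintro ⟨rfl, h⟩; exact hp h
      have h0 : (if c = x then (if x = y ∧ x ∈ S then l else 0) else 0) = 0 := by
        split_ifs <;> tauto
      rw [h0]
      simp only [if_true, mem_insert, true_or, ← starRingEnd_apply, map_mul, hca, map_add, add_zero]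
      have e : ∀ b : Prop, ∀ [Decidable b], (starRingEnd ℂ) (if b then 1 else 0) = if b then 1 else 0 := by
        intro b _; split_ifs <;> simp
      rw [e, e, ← hs]; ring
    · by_cases hcq : c = q
      · subst hcq
        have : c ∉ insert p S := by simp [h.symm, hq]
        have h0 : (if c = x then (if x = y ∧ x ∈ S then l else 0) else 0) = 0 := by
          split_ifs with h1 h2
          · exact absurd (h1 ▸ h2.2) hq
          · rfl
          · rfl
        rw [h0]; simp [this, hcp]
      · simp only [hcp, hcq, if_false, mem_insert, false_or, zero_add]
        by_cases hx : x = c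
        · subst hx
          by_cases hy : x = y
          · subst hy; simp
          · simp [hy, Ne.symm hy]
        · simp [hx, Ne.symm hx]
  rw [sum_congr rfl (fun c _ => this c), sum_add_distrib]
  simp [mul_add]

theorem exists_unitary {d r : ℕ} (C : Matrix (Fin d × Fin d) (Fin d × Fin d) ℂ) (hC : C.IsHermitian)
    (l : ℝ) (F : Finset (Fin d × Fin d)) (hF : F.card = r)
    (hev : ∀ c, hC.eigenvalues c = if c ∈ F then l else 0)
    (S : Finset (Fin d × Fin d)) (p q : Fin d × Fin d) (hp : p ∉ S) (hpq : p ≠ q)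
    (hS : S.card + 1 = r) :
    ∃ U ∈ Matrix.unitaryGroup (Fin d × Fin d) ℂ, U * C * Uᴴ =
      rot p q * diagonal (fun c => if c ∈ insert p S then (l : ℂ) else 0) * (rot p q)ᴴ := by
  have hcard : Fintype.card {c // c ∈ insert p S} = Fintype.card {c // c ∈ F} := by
    simp only [Fintype.card_coe]
    rw [card_insert_of_notMem hp]; omega
  obtain ⟨e⟩ := Fintype.card_eq.1 hcard
  let π : Equiv.Perm (Fin d × Fin d) := e.extendSubtype
  have hπ : ∀ c, (if π c ∈ F then l else 0) = if c ∈ insert p S then l else 0 := by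
    intro c
    by_cases h : c ∈ insert p S
    · rw [if_pos h, if_pos (e.extendSubtype_mem c h)]
    · rw [if_neg h, if_neg (e.extendSubtype_not_mem c h)]
  let V : Matrix (Fin d × Fin d) (Fin d × Fin d) ℂ := hC.eigenvectorUnitary
  have hV : Vᴴ * C * V = diagonal (RCLike.ofReal ∘ hC.eigenvalues) := by
    have := hC.conjStarAlgAut_star_eigenvectorUnitary
    rw [Unitary.conjStarAlgAut_star_apply] at this
    exact this
  have hVV : Vᴴ * V = 1 := Unitary.coe_star_mul_self hC.eigenvectorUnitary
  let P := V.submatrix id π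
  have hPd : Pᴴ * C * P = diagonal (fun c => if c ∈ insert p S then (l : ℂ) else 0) := by
    have : Pᴴ * C * P = (Vᴴ * C * V).submatrix π π := by
      ext; simp [P, mul_apply]
    rw [this, hV]
    ext x y
    simp only [submatrix_apply, diagonal_apply, π.injective.eq_iff, Function.comp]
    by_cases h : x = y
    · simp only [h, if_true, hev, hπ]; split_ifs <;> simp
    · simp [h]
  have hPP : Pᴴ * P = 1 := by
    have : Pᴴ * P = (Vᴴ * V).submatrix π π := by
      ext; simp [P, mul_apply]
    rw [this, hVV]; simp
  have hPP' : P * Pᴴ = 1 := mul_eq_one_comm.1 hPP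
  refine ⟨rot p q * Pᴴ, ?_, ?_⟩
  · rw [mem_unitaryGroup_iff', star_eq_conjTranspose, conjTranspose_mul, conjTranspose_conjTranspose,
      Matrix.mul_assoc, ← Matrix.mul_assoc (rot p q)ᴴ, rot_unitary p q hpq, Matrix.one_mul, hPP']
  · rw [conjTranspose_mul, conjTranspose_conjTranspose, ← hPd]
    simp only [Matrix.mul_assoc]

theorem necessary_ranks_small_d (d : ℕ) (hd3 : 3 ≤ d) (hd24 : d < 24) (r : ℕ)
    (C : Matrix (Fin d × Fin d) (Fin d × Fin d) ℂ) (hC : C.PosSemidef)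
    (hrank : C.rank = r) (l : ℝ) (hl : 0 < l)
    -- the spectrum of `C` consists of `r` copies of `l` and zeros
    (hspec : ∃ g : Fin (d * d) ≃ Fin d × Fin d,
      ∀ k : Fin (d * d), hC.1.eigenvalues (g k) = if (k : ℕ) < r then l else 0)
    -- majorization by a diagonal matrix holds over the whole unitary orbit
    (hmaj : ∀ U : Matrix (Fin d × Fin d) (Fin d × Fin d) ℂ,
      U ∈ Matrix.unitaryGroup (Fin d × Fin d) ℂ →
      ∃ D : Matrix (Fin d × Fin d) (Fin d × Fin d) ℂ, D.IsDiag ∧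
        (∃ g : Equiv.Perm (Fin d × Fin d), ∀ p, D p p = (hC.1.eigenvalues (g p) : ℂ)) ∧
        ∀ (hU1 : (ptrace1 (U * C * Uᴴ)).IsHermitian)
          (hU2 : (ptrace2 (U * C * Uᴴ)).IsHermitian)
          (hD1 : (ptrace1 D).IsHermitian) (hD2 : (ptrace2 D).IsHermitian),
          Majorizes (Sum.elim hU1.eigenvalues hU2.eigenvalues)
            (Sum.elim hD1.eigenvalues hD2.eigenvalues)) :
    r ≤ 3 ∨ d * d - 3 ≤ r ∨ ∃ t : ℕ, 2 ≤ t ∧ t ≤ d - 2 ∧ r = t * d := by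
  apply combin d r hd24 hd3
  · rw [← hrank]
    simpa using C.rank_le_card_width
  have hr : r ≤ d * d := by
    rw [← hrank]
    simpa using C.rank_le_card_width
  obtain ⟨g, hg⟩ := hspec
  let F : Finset (Fin d × Fin d) := univ.filter (fun c => ((g.symm c : Fin (d * d)) : ℕ) < r)
  have hev : ∀ c, hC.1.eigenvalues c = if c ∈ F then l else 0 := by
    intro c
    have := hg (g.symm c)
    rw [Equiv.apply_symm_apply] at this
    simp [F, this]
  have hF : F.card = r := by
    have h1 : F = (univ.filter (fun k : Fin (d * d) => (k : ℕ) < r)).map g.toEmbedding := by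
      ext c; simp [F, Equiv.eq_symm_apply]
    rw [h1, card_map, Fin.card_filter_val_lt]
    omega
  intro S p q hp hq h1 h2 hS
  have hpq : p ≠ q := fun h => h1 (h ▸ rfl)
  obtain ⟨U, hU, hUC⟩ := exists_unitary C hC.1 l F hF hev S p q hp hpq hS
  obtain ⟨D, hD, ⟨π, hπ⟩, hDm⟩ := hmaj U hU
  let w : Fin d × Fin d → ℝ := fun c => l * ((if c ∈ S then 1 else 0) +
    ((if c = p then 1 / 2 else 0) + (if c = q then 1 / 2 else 0)))
  let T : Finset (Fin d × Fin d) := univ.filter (fun c => π c ∈ F)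
  let u : Fin d × Fin d → ℝ := fun c => if c ∈ T then l else 0
  have hT : T.card = r := by
    have h1 : T = F.map π.symm.toEmbedding := by
      ext c; simp [T, Equiv.symm_apply_eq]
    rw [h1, card_map, hF]
  have hu : ∀ c, D c c = (u c : ℂ) := by
    intro c; rw [hπ, hev]; simp [u, T]
  have hw : ∀ c, (U * C * Uᴴ) c c = (w c : ℂ) := by
    intro c
    rw [hUC, rot_conj p q hpq S hp hq]
    by_cases e1 : c = p
    · subst e1; simp [w, hpq, hp]
    · by_cases e2 : c = q
      · subst e2; simp [w, e1, hq]
      · by_cases e3 : c ∈ S <;> simp [w, e1, e2, e3]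
  have hoff : ∀ x y, x ≠ y → (x.1 = y.1 ∨ x.2 = y.2) → (U * C * Uᴴ) x y = 0 := by
    intro x y hxy hor
    rw [hUC, rot_conj p q hpq S hp hq]
    by_cases e1 : x = p
    · subst e1
      have : y ≠ q := by rintro rfl; tauto
      simp [hxy.symm, this, hxy]
    · by_cases e2 : x = q
      · subst e2
        have : y ≠ p := by rintro rfl; rcases hor with h | h <;> simp_all
        simp [hxy.symm, this, hxy]
      · simp [e1, e2, hxy]
  have hUH : (U * C * Uᴴ).IsHermitian := isHermitian_mul_mul_conjTranspose U hC.1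
  have hDH : D.IsHermitian := by
    ext x y
    by_cases h : x = y
    · subst h; simp [hu]
    · rw [conjTranspose_apply, hD h, hD (Ne.symm h), star_zero]
  obtain ⟨hU1, hU2⟩ := ptrace_herm _ hUH
  obtain ⟨hD1, hD2⟩ := ptrace_herm _ hDH
  have hm := (hDm hU1 hU2 hD1 hD2).1
  obtain ⟨e, he⟩ := eig_line _ w hw (fun i s t h => hoff _ _ (by simp [h]) (Or.inl rfl))
    (fun i j s h => hoff _ _ (by simp [h]) (Or.inr rfl)) hU1 hU2
  obtain ⟨f, hf⟩ := eig_line _ u hu (fun i s t h => hD (by simp [h]))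
    (fun i j s h => hD (by simp [h])) hD1 hD2
  refine ⟨T, hT, fun R K => ?_⟩
  let A := (K.disjSum R).map e.symm.toEmbedding
  obtain ⟨B, hB, hBm⟩ := exists_maxSum (Sum.elim hD1.eigenvalues hD2.eigenvalues) A
  have hA := le_maxSum (Sum.elim hU1.eigenvalues hU2.eigenvalues) A
  have hAB := (hA.trans (hm _)).trans_eq hBm
  have sA : ∑ i ∈ A, Sum.elim hU1.eigenvalues hU2.eigenvalues i = ∑ i ∈ K.disjSum R, lineVec w i := by
    rw [sum_map]; apply sum_congr rfl; intro i _; rw [he]; simp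
  have sB : ∑ i ∈ B, Sum.elim hD1.eigenvalues hD2.eigenvalues i =
      ∑ i ∈ B.map f.toEmbedding, lineVec u i := by
    rw [sum_map]; apply sum_congr rfl; intro i _; rw [hf]; simp
  rw [sA, sB, lineVec_sum, lineVec_sum] at hAB
  have hcB : (B.map f.toEmbedding).card = K.card + R.card := by
    rw [card_map, hB, card_map, card_disjSum]
  generalize B.map f.toEmbedding = B' at *
  refine ⟨B'.toRight, B'.toLeft, ?_, ?_⟩
  · have := card_toLeft_add_card_toRight (u := B')
    omega
  · rw [toLeft_disjSum, toRight_disjSum] at hAB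
    have s1 : ∑ c, w c * (wt c R K : ℝ) =
        l * ((wsum S R K : ℝ) + (1 / 2 * (wt p R K : ℝ) + 1 / 2 * (wt q R K : ℝ))) := by
      rw [wsum_eq_sum]
      push_cast
      simp only [w, mul_assoc, add_mul, ite_mul, zero_mul, one_mul]
      rw [← mul_sum, sum_add_distrib, sum_add_distrib]
      simp
    have s2 : ∑ c, u c * (wt c B'.toRight B'.toLeft : ℝ) = l * (wsum T B'.toRight B'.toLeft : ℝ) := by
      rw [wsum_eq_sum]
      push_cast
      simp only [u, ite_mul, zero_mul]
      rw [sum_ite_mem, univ_inter, mul_sum]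
    rw [s1, s2] at hAB
    have := le_of_mul_le_mul_left hAB hl
    have h3 : (2 * wsum S R K + wt p R K + wt q R K : ℝ) ≤ 2 * (wsum T B'.toRight B'.toLeft : ℝ) := by
      linarith
    exact_mod_cast h3
end

section
/- Let 2 ≤ d1 < d2 and let C be a Hermitian matrix on ℂ^{d1}⊗ℂ^{d2} of rank at most 3. Then λ(tr_1[C]) ⊕ λ(tr_2[C]) ≺ λ(tr_1[Λ]) ⊕ λ(tr_2[Λ]), where Λ is the diagonal matrix on ℂ^{d1}⊗ℂ^{d2} whose diagonal lists the eigenvalues of C in decreasing order (with respect to the lexicographic index ordering). -/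
open Matrix Finset Kronecker
open scoped ComplexOrder

/-- Scalar Ky Fan bound. -/
lemma kyfan_scalar {n : ℕ} (ν γ : Fin n → ℝ) (hν : Antitone ν) (h0 : ∀ j, 0 ≤ ν j)
    (g0 : ∀ j, 0 ≤ γ j) (g1 : ∀ j, γ j ≤ 1) (m : ℕ) (hm : m < n) (hs : ∑ j, γ j ≤ m) :
    ∑ j, ν j * γ j ≤ ∑ j : Fin n, if (j : ℕ) < m then ν j else 0 := by
  set t := ν ⟨m, hm⟩ with ht
  have key : ∀ j : Fin n, (ν j - t) * γ j ≤ if (j : ℕ) < m then ν j - t else 0 := by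
    intro j
    split_ifs with h
    · have : t ≤ ν j := hν (by rw [Fin.le_def]; exact h.le)
      nlinarith [g1 j]
    · have : ν j ≤ t := hν (by rw [Fin.le_def]; exact not_lt.mp h)
      nlinarith [g0 j]
  have h1 := Finset.sum_le_sum (fun j (_ : j ∈ Finset.univ) => key j)
  have e1 : ∑ j, (ν j - t) * γ j = ∑ j, ν j * γ j - t * ∑ j, γ j := by
    rw [Finset.mul_sum, ← Finset.sum_sub_distrib]
    exact Finset.sum_congr rfl fun j _ => by ring
  have e2 : ∑ j : Fin n, (if (j : ℕ) < m then ν j - t else 0)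
      = (∑ j : Fin n, if (j : ℕ) < m then ν j else 0) - m * t := by
    have : (m : ℝ) * t = ∑ j : Fin n, if (j : ℕ) < m then t else 0 := by
      rw [← Finset.sum_filter, Finset.sum_const, nsmul_eq_mul]
      congr 2
      have := Fin.card_filter_val_lt (n := n) (m := m)
      rw [this]; omega
    rw [this, ← Finset.sum_sub_distrib]
    exact Finset.sum_congr rfl fun j _ => by split_ifs <;> ring
  rw [e1, e2] at h1
  have : t * ∑ j, γ j ≤ t * m := mul_le_mul_of_nonneg_left hs (h0 _)
  linarith

/-- The weight of a cell. -/
noncomputable def cellw {d1 d2 : ℕ} (S : Finset (Fin d2)) (T : Finset (Fin d1))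
    (z : Fin d1 × Fin d2) : ℝ :=
  (if z.2 ∈ S then 1 else 0) + (if z.1 ∈ T then 1 else 0)

/-- Row and column sums. -/
noncomputable def rcs {d1 d2 : ℕ} (ν : Fin (d1 * d2) → ℝ) : Fin d2 ⊕ Fin d1 → ℝ :=
  Sum.elim (fun s : Fin d2 => ∑ i : Fin d1, ν (finProdFinEquiv (i, s)))
                (fun j : Fin d1 => ∑ s : Fin d2, ν (finProdFinEquiv (j, s)))

lemma plus_bound {d1 d2 : ℕ} (hd1 : 2 ≤ d1) (hdd : d1 < d2)
    (c : Fin (d1 * d2) → Fin d1 × Fin d2 → ℝ) (c0 : ∀ j z, 0 ≤ c j z)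
    (c1 : ∀ j, ∑ z, c j z = 1) (c2 : ∀ z, ∑ j, c j z = 1)
    (S : Finset (Fin d2)) (T : Finset (Fin d1))
    (ν : Fin (d1 * d2) → ℝ) (hν : Antitone ν) (h0 : ∀ j, 0 ≤ ν j)
    (p : ℕ) (hp : p ≤ 3) (hz : ∀ j : Fin (d1 * d2), p ≤ (j : ℕ) → ν j = 0) :
    ∃ B : Finset (Fin d2 ⊕ Fin d1), B.card ≤ S.card + T.card ∧
      (∀ s, Sum.inl s ∈ B → (s : ℕ) < p) ∧ (∀ i, Sum.inr i ∈ B → (i : ℕ) = 0) ∧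
      ∑ j, ν j * ∑ z, c j z * cellw S T z ≤ ∑ b ∈ B, rcs ν b := by
  by_cases hk : S.card + T.card = 0
  · have hS : S = ∅ := Finset.card_eq_zero.mp (by omega)
    have hT : T = ∅ := Finset.card_eq_zero.mp (by omega)
    refine ⟨∅, by simp, by simp, by simp, ?_⟩
    simp [cellw, hS, hT]
  set k := S.card + T.card with hkdef
  set m := min (k - 1) p with hm
  have hn : 6 ≤ d1 * d2 := by nlinarith
  have i0 : 0 < d1 := by omega
  let B1 : Finset (Fin d2) := Finset.univ.filter (fun s => (s : ℕ) < m)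
  have hB1 : B1.card = min d2 m := Fin.card_filter_val_lt
  let B2 : Finset (Fin d1) := {⟨0, i0⟩}
  refine ⟨B1.disjSum B2, ?_, ?_, ?_, ?_⟩
  · rw [Finset.card_disjSum, hB1]; simp only [B2, Finset.card_singleton]; omega
  · intro s hs
    rw [Finset.inl_mem_disjSum] at hs
    have := (Finset.mem_filter.mp hs).2
    omega
  · intro i hi
    rw [Finset.inr_mem_disjSum] at hi
    simp only [B2, Finset.mem_singleton] at hi
    rw [hi]
  -- the counting part
  let γ : Fin (d1 * d2) → ℝ := fun j => ∑ z, c j z * (if z ∈ T ×ˢ S then 1 else 0)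
  have g0 : ∀ j, 0 ≤ γ j := fun j => Finset.sum_nonneg fun z _ =>
    mul_nonneg (c0 j z) (by split_ifs <;> norm_num)
  have g1 : ∀ j, γ j ≤ 1 := by
    intro j
    rw [← c1 j]
    refine Finset.sum_le_sum fun z _ => ?_
    split_ifs
    · simp
    · simpa using c0 j z
  have gs : ∑ j, γ j = (T.card * S.card : ℕ) := by
    simp only [γ]
    rw [Finset.sum_comm]
    simp_rw [← Finset.sum_mul, c2, one_mul]
    rw [Finset.sum_ite_mem, Finset.univ_inter, Finset.sum_const, Finset.card_product]
    simp
  have hw : ∀ j, ∑ z, c j z * cellw S T z ≤ 1 + γ j := by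
    intro j
    have e : 1 + γ j = ∑ z, (c j z + c j z * (if z ∈ T ×ˢ S then 1 else 0)) := by
      rw [Finset.sum_add_distrib, c1 j]
    rw [e]
    refine Finset.sum_le_sum fun z _ => ?_
    have := c0 j z
    simp only [cellw, Finset.mem_product]
    by_cases h1 : z.1 ∈ T <;> by_cases h2 : z.2 ∈ S <;> simp [h1, h2] <;> linarith
  have hfan : ∑ j, ν j * γ j ≤ ∑ j : Fin (d1 * d2), if (j : ℕ) < m then ν j else 0 := by
    by_cases hpk : p ≤ k - 1
    · have : m = p := by omega
      rw [this]
      refine Finset.sum_le_sum fun j _ => ?_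
      split_ifs with h
      · nlinarith [g1 j, h0 j]
      · rw [hz j (by omega)]; simp
    · refine kyfan_scalar ν γ hν h0 g0 g1 m (by omega) ?_
      rw [gs]
      have : m = k - 1 := by omega
      rw [this]
      norm_cast
      have h3 : S.card + T.card ≤ 3 := by omega
      have hS3 : S.card ≤ 3 := by omega
      have hT3 : T.card ≤ 3 := by omega
      rw [hkdef]
      generalize S.card = a at *
      generalize T.card = b at *
      interval_cases a <;> interval_cases b <;> omega
  have hall : ∑ j, ν j * ∑ z, c j z * cellw S T z
      ≤ ∑ j, ν j + ∑ j : Fin (d1 * d2), if (j : ℕ) < m then ν j else 0 := by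
    refine le_trans ?_ (add_le_add_right hfan _)
    rw [← Finset.sum_add_distrib]
    refine Finset.sum_le_sum fun j _ => ?_
    nlinarith [hw j, h0 j]
  refine hall.trans ?_
  rw [Finset.sum_disjSum, add_comm]
  have hcell : ∀ (i : Fin d1) (s : Fin d2), i ≠ ⟨0, i0⟩ → ∀ q ≤ 3, q ≤ ((finProdFinEquiv (i, s) : Fin (d1 * d2)) : ℕ) := by
    intro i s hi q hq
    have : 1 ≤ (i : ℕ) := by
      rcases Nat.eq_zero_or_pos (i : ℕ) with h | h
      · exact absurd (Fin.ext h) hi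
      · exact h
    simp only [finProdFinEquiv_apply_val]
    nlinarith
  refine add_le_add ?_ ?_
  · rw [← Equiv.sum_comp finProdFinEquiv, Fintype.sum_prod_type]
    rw [Finset.sum_eq_single (⟨0, i0⟩ : Fin d1)]
    · rw [← Finset.sum_filter]
      refine le_of_eq ?_
      refine Finset.sum_congr ?_ ?_
      · ext s; simp [B1]
      · intro s hs
        simp only [rcs, Sum.elim_inl]
        rw [Finset.sum_eq_single (⟨0, i0⟩ : Fin d1)]
        · intro i _ hi
          exact hz _ (hcell i s hi p hp)
        · simp
    · intro i _ hi
      refine Finset.sum_eq_zero fun s _ => ?_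
      rw [if_neg]
      exact not_lt.mpr (hcell i s hi m (by omega))
    · simp
  · simp only [B2, Finset.sum_singleton, rcs, Sum.elim_inr]
    rw [← Equiv.sum_comp finProdFinEquiv, Fintype.sum_prod_type]
    rw [Finset.sum_eq_single (⟨0, i0⟩ : Fin d1)]
    · intro i _ hi
      exact Finset.sum_eq_zero fun s _ => hz _ (hcell i s hi p hp)
    · simp

lemma ptrace1_conj {d1 d2 : ℕ} (C : Matrix (Fin d1 × Fin d2) (Fin d1 × Fin d2) ℂ)
    (P : Matrix (Fin d1) (Fin d1) ℂ) (Q : Matrix (Fin d2) (Fin d2) ℂ)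
    (hP : P * Pᴴ = 1) :
    ptrace1 ((P ⊗ₖ Q)ᴴ * C * (P ⊗ₖ Q)) = Qᴴ * ptrace1 C * Q := by
  have hP' : ∀ i j, ∑ t, P i t * star (P j t) = if i = j then 1 else 0 := by
    intro i j
    have := congrFun (congrFun hP i) j
    simpa [Matrix.mul_apply, Matrix.one_apply] using this
  ext s s'
  simp only [ptrace1, Matrix.of_apply, Matrix.mul_apply, Matrix.conjTranspose_apply,
    Matrix.kroneckerMap_apply, Fintype.sum_prod_type, star_mul', Finset.sum_mul, Finset.mul_sum]
  calc _ = ∑ j, ∑ b, ∑ i, ∑ a, (∑ t, P j t * star (P i t)) *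
        (star (Q a s) * C (i, a) (j, b) * Q b s') := by
        rw [Finset.sum_comm]
        refine Finset.sum_congr rfl fun j _ => ?_
        rw [Finset.sum_comm]
        refine Finset.sum_congr rfl fun b _ => ?_
        rw [Finset.sum_comm]
        refine Finset.sum_congr rfl fun i _ => ?_
        rw [Finset.sum_comm]
        refine Finset.sum_congr rfl fun a _ => ?_
        rw [Finset.sum_mul]
        refine Finset.sum_congr rfl fun t _ => ?_
        ring
    _ = ∑ j, ∑ b, ∑ a, star (Q a s) * C (j, a) (j, b) * Q b s' := by
        refine Finset.sum_congr rfl fun j _ => Finset.sum_congr rfl fun b _ => ?_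
        simp_rw [hP']
        rw [Finset.sum_eq_single j]
        · simp
        · intro i _ hi
          simp [Ne.symm hi]
        · simp
    _ = _ := by
        rw [Finset.sum_comm]
        refine Finset.sum_congr rfl fun b _ => ?_
        rw [Finset.sum_comm]

lemma ptrace2_conj {d1 d2 : ℕ} (C : Matrix (Fin d1 × Fin d2) (Fin d1 × Fin d2) ℂ)
    (P : Matrix (Fin d1) (Fin d1) ℂ) (Q : Matrix (Fin d2) (Fin d2) ℂ)
    (hQ : Q * Qᴴ = 1) :
    ptrace2 ((P ⊗ₖ Q)ᴴ * C * (P ⊗ₖ Q)) = Pᴴ * ptrace2 C * P := by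
  have hQ' : ∀ i j, ∑ t, Q i t * star (Q j t) = if i = j then 1 else 0 := by
    intro i j
    have := congrFun (congrFun hQ i) j
    simpa [Matrix.mul_apply, Matrix.one_apply] using this
  ext s s'
  simp only [ptrace2, Matrix.of_apply, Matrix.mul_apply, Matrix.conjTranspose_apply,
    Matrix.kroneckerMap_apply, Fintype.sum_prod_type, star_mul', Finset.sum_mul, Finset.mul_sum]
  calc _ = ∑ j, ∑ b, ∑ i, ∑ a, (∑ t, Q b t * star (Q a t)) *
        (star (P i s) * C (i, a) (j, b) * P j s') := by
        rw [Finset.sum_comm]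
        refine Finset.sum_congr rfl fun j _ => ?_
        rw [Finset.sum_comm]
        refine Finset.sum_congr rfl fun b _ => ?_
        rw [Finset.sum_comm]
        refine Finset.sum_congr rfl fun i _ => ?_
        rw [Finset.sum_comm]
        refine Finset.sum_congr rfl fun a _ => ?_
        rw [Finset.sum_mul]
        refine Finset.sum_congr rfl fun t _ => ?_
        ring
    _ = ∑ j, ∑ b, ∑ i, star (P i s) * C (i, b) (j, b) * P j s' := by
        refine Finset.sum_congr rfl fun j _ => Finset.sum_congr rfl fun b _ =>
          Finset.sum_congr rfl fun i _ => ?_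
        simp_rw [hQ']
        rw [Finset.sum_eq_single b]
        · simp
        · intro i _ hi
          simp [Ne.symm hi]
        · simp
    _ = _ := by
        refine Finset.sum_congr rfl fun b _ => ?_
        rw [Finset.sum_comm]

lemma herm_diag {m : Type*} [Fintype m] [DecidableEq m] {A : Matrix m m ℂ} (hA : A.IsHermitian) :
    (hA.eigenvectorUnitary : Matrix m m ℂ)ᴴ * A * (hA.eigenvectorUnitary : Matrix m m ℂ)
      = diagonal (fun i => ((hA.eigenvalues i : ℝ) : ℂ)) := by
  have := hA.conjStarAlgAut_star_eigenvectorUnitary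
  rw [Unitary.conjStarAlgAut_star_apply] at this
  exact this

lemma unitary_data {m : Type*} [Fintype m] [DecidableEq m] {A : Matrix m m ℂ}
    (hA : A.IsHermitian) :
    (hA.eigenvectorUnitary : Matrix m m ℂ)ᴴ * (hA.eigenvectorUnitary : Matrix m m ℂ) = 1 ∧
    (hA.eigenvectorUnitary : Matrix m m ℂ) * (hA.eigenvectorUnitary : Matrix m m ℂ)ᴴ = 1 :=
  ⟨Unitary.coe_star_mul_self _, Unitary.coe_mul_star_self _⟩

lemma exists_weights {d1 d2 : ℕ}
    (C : Matrix (Fin d1 × Fin d2) (Fin d1 × Fin d2) ℂ) (hC : C.IsHermitian)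
    (htr1 : (ptrace1 C).IsHermitian) (htr2 : (ptrace2 C).IsHermitian) :
    ∃ c : Fin d1 × Fin d2 → Fin d1 × Fin d2 → ℝ, (∀ j z, 0 ≤ c j z) ∧
      (∀ j, ∑ z, c j z = 1) ∧ (∀ z, ∑ j, c j z = 1) ∧
      (∀ s, htr1.eigenvalues s = ∑ t, ∑ j, hC.eigenvalues j * c j (t, s)) ∧
      (∀ t, htr2.eigenvalues t = ∑ s, ∑ j, hC.eigenvalues j * c j (t, s)) := by
  obtain ⟨P1, P2⟩ := unitary_data htr2
  obtain ⟨Q1, Q2⟩ := unitary_data htr1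
  obtain ⟨U1, U2⟩ := unitary_data hC
  have dP := herm_diag htr2
  have dQ := herm_diag htr1
  have dU := herm_diag hC
  generalize (htr2.eigenvectorUnitary : Matrix (Fin d1) (Fin d1) ℂ) = P at *
  generalize (htr1.eigenvectorUnitary : Matrix (Fin d2) (Fin d2) ℂ) = Q at *
  generalize (hC.eigenvectorUnitary : Matrix (Fin d1 × Fin d2) (Fin d1 × Fin d2) ℂ) = U at *
  have e1 := ptrace1_conj C P Q P2
  have e2 := ptrace2_conj C P Q Q2
  have V1 : (P ⊗ₖ Q)ᴴ * (P ⊗ₖ Q) = 1 := by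
    rw [conjTranspose_kronecker, ← mul_kronecker_mul, P1, Q1, one_kronecker_one]
  have V2 : (P ⊗ₖ Q) * (P ⊗ₖ Q)ᴴ = 1 := by
    rw [conjTranspose_kronecker, ← mul_kronecker_mul, P2, Q2, one_kronecker_one]
  rw [dQ] at e1
  rw [dP] at e2
  generalize P ⊗ₖ Q = V at *
  set W := Vᴴ * U with hW
  have W1 : Wᴴ * W = 1 := by
    rw [hW, conjTranspose_mul, conjTranspose_conjTranspose, Matrix.mul_assoc,
      ← Matrix.mul_assoc V, V2, Matrix.one_mul, U1]
  have W2 : W * Wᴴ = 1 := by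
    rw [hW, conjTranspose_mul, conjTranspose_conjTranspose, Matrix.mul_assoc,
      ← Matrix.mul_assoc U, U2, Matrix.one_mul, V1]
  have hCU : C = U * diagonal (fun i => ((hC.eigenvalues i : ℝ) : ℂ)) * Uᴴ := by
    rw [← dU]
    calc C = (U * Uᴴ) * C * (U * Uᴴ) := by rw [U2]; simp
      _ = _ := by simp only [Matrix.mul_assoc]
  have hVC : Vᴴ * C * V = W * diagonal (fun i => ((hC.eigenvalues i : ℝ) : ℂ)) * Wᴴ := by
    rw [hW, conjTranspose_mul, conjTranspose_conjTranspose]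
    conv_lhs => rw [hCU]
    simp only [Matrix.mul_assoc]
  have hent : ∀ z, (Vᴴ * C * V) z z
      = ((∑ j, hC.eigenvalues j * Complex.normSq (W z j) : ℝ) : ℂ) := by
    intro z
    rw [hVC, Matrix.mul_apply]
    push_cast
    refine Finset.sum_congr rfl fun j _ => ?_
    rw [Matrix.mul_diagonal, Matrix.conjTranspose_apply, Complex.normSq_eq_conj_mul_self]
    simp only [Complex.star_def]
    ring
  refine ⟨fun j z => Complex.normSq (W z j), fun j z => Complex.normSq_nonneg _, ?_, ?_, ?_, ?_⟩
  · intro j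
    have := congrFun (congrFun W1 j) j
    rw [Matrix.mul_apply, Matrix.one_apply_eq] at this
    have h : ((∑ z, Complex.normSq (W z j) : ℝ) : ℂ) = 1 := by
      rw [← this]
      push_cast
      refine Finset.sum_congr rfl fun z _ => ?_
      rw [Matrix.conjTranspose_apply, Complex.normSq_eq_conj_mul_self]
      rfl
    exact_mod_cast h
  · intro z
    have := congrFun (congrFun W2 z) z
    rw [Matrix.mul_apply, Matrix.one_apply_eq] at this
    have h : ((∑ j, Complex.normSq (W z j) : ℝ) : ℂ) = 1 := by
      rw [← this]
      push_cast
      refine Finset.sum_congr rfl fun j _ => ?_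
      rw [Matrix.conjTranspose_apply, Complex.normSq_eq_conj_mul_self, mul_comm]
      rfl
    exact_mod_cast h
  · intro s
    have := congrFun (congrFun e1 s) s
    rw [Matrix.diagonal_apply_eq] at this
    simp only [ptrace1, Matrix.of_apply, hent] at this
    have h := this.symm
    exact_mod_cast h
  · intro t
    have := congrFun (congrFun e2 t) t
    rw [Matrix.diagonal_apply_eq] at this
    simp only [ptrace2, Matrix.of_apply, hent] at this
    have h := this.symm
    exact_mod_cast h

lemma rev_cell {d1 d2 : ℕ} (i : Fin d1) (s : Fin d2) :
    Fin.rev (finProdFinEquiv (i, s) : Fin (d1 * d2)) = finProdFinEquiv (Fin.rev i, Fin.rev s) := by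
  apply Fin.ext
  simp only [Fin.val_rev, finProdFinEquiv_apply_val]
  obtain ⟨i, hi⟩ := i
  obtain ⟨s, hs⟩ := s
  obtain ⟨a, rfl⟩ := Nat.exists_eq_add_of_lt hi
  obtain ⟨b, rfl⟩ := Nat.exists_eq_add_of_lt hs
  have h1 : i + a + 1 - (i + 1) = a := by omega
  have h2 : s + b + 1 - (s + 1) = b := by omega
  simp only [h1, h2]
  have : (i + a + 1) * (s + b + 1) = (s + (s + b + 1) * i + 1) + (b + (s + b + 1) * a) := by ring
  omega

/-- Reversal on both kinds of indices. -/
def revSum (d1 d2 : ℕ) : Fin d2 ⊕ Fin d1 ≃ Fin d2 ⊕ Fin d1 :=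
  Equiv.sumCongr Fin.revPerm Fin.revPerm

lemma rcs_rev {d1 d2 : ℕ} (ν : Fin (d1 * d2) → ℝ) (b : Fin d2 ⊕ Fin d1) :
    rcs (fun j => ν (Fin.rev j)) b = rcs ν (revSum d1 d2 b) := by
  rcases b with s | i
  · simp only [rcs, revSum, Sum.elim_inl, Equiv.sumCongr_apply, Sum.map_inl, rev_cell,
      Fin.revPerm_apply]
    exact Equiv.sum_comp Fin.revPerm (fun i => ν (finProdFinEquiv (i, Fin.rev s)))
  · simp only [rcs, revSum, Sum.elim_inr, Equiv.sumCongr_apply, Sum.map_inr, rev_cell,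
      Fin.revPerm_apply]
    exact Equiv.sum_comp Fin.revPerm (fun s => ν (finProdFinEquiv (Fin.rev i, s)))

lemma rcs_total {d1 d2 : ℕ} (ν : Fin (d1 * d2) → ℝ) : ∑ b, rcs ν b = 2 * ∑ j, ν j := by
  rw [Fintype.sum_sum_type]
  simp only [rcs, Sum.elim_inl, Sum.elim_inr]
  rw [Finset.sum_comm, ← Equiv.sum_comp finProdFinEquiv ν, Fintype.sum_prod_type]
  ring

lemma antitone_support {n : ℕ} (μ : Fin n → ℝ) (hμ : Antitone μ) (j : Fin n)
    (hj : (Finset.univ.filter (fun i => 0 < μ i)).card ≤ (j : ℕ)) : μ j ≤ 0 := by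
  by_contra h
  push Not at h
  have hsub : Finset.Iic j ⊆ Finset.univ.filter (fun i => 0 < μ i) := by
    intro i hi
    simp only [Finset.mem_filter, Finset.mem_univ, true_and]
    exact lt_of_lt_of_le h (hμ (Finset.mem_Iic.mp hi))
  have := Finset.card_le_card hsub
  rw [Fin.card_Iic] at this
  omega

lemma scalar_main {d1 d2 : ℕ} (hd1 : 2 ≤ d1) (hdd : d1 < d2)
    (c : Fin (d1 * d2) → Fin d1 × Fin d2 → ℝ) (c0 : ∀ j z, 0 ≤ c j z)
    (c1 : ∀ j, ∑ z, c j z = 1) (c2 : ∀ z, ∑ j, c j z = 1)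
    (S : Finset (Fin d2)) (T : Finset (Fin d1))
    (μ : Fin (d1 * d2) → ℝ) (hμ : Antitone μ)
    (hcard : (Finset.univ.filter (fun j => μ j ≠ 0)).card ≤ 3) :
    ∃ A : Finset (Fin d2 ⊕ Fin d1), A.card = S.card + T.card ∧
      ∑ j, μ j * ∑ z, c j z * cellw S T z ≤ ∑ b ∈ A, rcs μ b := by
  set p := (Finset.univ.filter (fun i => 0 < μ i)).card with hp
  set q := (Finset.univ.filter (fun i => 0 < -μ (Fin.rev i))).card with hq
  have hq' : q = (Finset.univ.filter (fun i => μ i < 0)).card := by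
    rw [hq]
    refine Finset.card_bij (fun i _ => Fin.rev i) ?_ ?_ ?_
    · intro i hi; simpa using hi
    · intro i _ i' _ h; exact Fin.rev_injective h
    · intro i hi; exact ⟨Fin.rev i, by simpa using hi, by simp⟩
  have hpq : p + q ≤ 3 := by
    rw [hq', hp, ← Finset.card_union_of_disjoint]
    · refine le_trans (Finset.card_le_card ?_) hcard
      intro i hi
      simp only [Finset.mem_union, Finset.mem_filter, Finset.mem_univ, true_and] at hi ⊢
      rcases hi with h | h
      · exact h.ne'
      · exact h.ne
    · rw [Finset.disjoint_filter]
      intro i _ h; linarith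
  have hμr : Antitone (fun j => -μ (Fin.rev j)) := by
    intro a b hab
    exact neg_le_neg (hμ (Fin.rev_le_rev.mpr hab))
  let νp : Fin (d1 * d2) → ℝ := fun j => max (μ j) 0
  let νm : Fin (d1 * d2) → ℝ := fun j => max (-μ j) 0
  have hsplit : ∀ j, μ j = νp j - νm j := by
    intro j
    simp only [νp, νm]
    rcases le_total (μ j) 0 with h | h
    · rw [max_eq_right h, max_eq_left (by linarith)]; ring
    · rw [max_eq_left h, max_eq_right (by linarith)]; ring
  obtain ⟨B, hB1, hB2, hB3, hB4⟩ := plus_bound hd1 hdd c c0 c1 c2 S T νp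
    (fun a b hab => max_le_max (hμ hab) le_rfl) (fun j => le_max_right _ _) p (by omega)
    (fun j hj => max_eq_right (antitone_support μ hμ j hj))
  obtain ⟨D, hD1, hD2, hD3, hD4⟩ := plus_bound hd1 hdd (fun j => c (Fin.rev j))
    (fun j z => c0 _ z) (fun j => c1 _)
    (fun z => (Equiv.sum_comp Fin.revPerm (fun j => c j z)).trans (c2 z)) Sᶜ Tᶜ
    (fun j => νm (Fin.rev j))
    (fun a b hab => max_le_max (hμr hab) le_rfl) (fun j => le_max_right _ _) q (by omega)
    (fun j hj => max_eq_right (antitone_support _ hμr j hj))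
  simp_rw [rcs_rev] at hD4
  have hsumrev := Equiv.sum_comp Fin.revPerm (fun j => νm j * ∑ z, c j z * cellw Sᶜ Tᶜ z)
  simp only [Fin.revPerm_apply] at hsumrev
  rw [hsumrev] at hD4
  set D' := D.map (revSum d1 d2).toEmbedding with hD'
  have hD4' : ∑ j, νm j * ∑ z, c j z * cellw Sᶜ Tᶜ z ≤ ∑ b ∈ D', rcs νm b := by
    rw [hD', Finset.sum_map]; exact hD4
  have hDc : D'.card ≤ (d2 - S.card) + (d1 - T.card) := by
    rw [hD', Finset.card_map]
    simpa [Finset.card_compl] using hD1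
  have hSc : S.card ≤ d2 := by simpa using Finset.card_le_univ S
  have hTc : T.card ≤ d1 := by simpa using Finset.card_le_univ T
  have hdisj : B ⊆ D'ᶜ := by
    intro b hb
    rw [Finset.mem_compl]
    intro hb'
    obtain ⟨e, he, heb⟩ := Finset.mem_map.mp hb'
    rcases e with s | i
    · have h1 := hD2 s he
      have h2 : b = Sum.inl (Fin.rev s) := by rw [← heb]; rfl
      rw [h2] at hb
      have h3 := hB2 _ hb
      rw [Fin.val_rev] at h3
      omega
    · have h1 := hD3 i he
      have h2 : b = Sum.inr (Fin.rev i) := by rw [← heb]; rfl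
      rw [h2] at hb
      have h3 := hB3 _ hb
      rw [Fin.val_rev] at h3
      omega
  obtain ⟨A, hBA, hAD, hA⟩ := Finset.exists_subsuperset_card_eq hdisj hB1 (by
    rw [Finset.card_compl, Fintype.card_sum, Fintype.card_fin, Fintype.card_fin]; omega)
  refine ⟨A, hA, ?_⟩
  have rcs0 : ∀ ν : Fin (d1 * d2) → ℝ, (∀ j, 0 ≤ ν j) → ∀ b, 0 ≤ rcs ν b := by
    intro ν h b
    rcases b with s | i
    · simp only [rcs, Sum.elim_inl, Sum.elim_inr]
      exact Finset.sum_nonneg fun _ _ => h _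
    · simp only [rcs, Sum.elim_inl, Sum.elim_inr]
      exact Finset.sum_nonneg fun _ _ => h _
  have f1 : ∑ b ∈ B, rcs νp b ≤ ∑ b ∈ A, rcs νp b :=
    Finset.sum_le_sum_of_subset_of_nonneg hBA fun b _ _ => rcs0 _ (fun j => le_max_right _ _) b
  have f2 : ∑ b ∈ D', rcs νm b ≤ ∑ b ∈ Aᶜ, rcs νm b := by
    refine Finset.sum_le_sum_of_subset_of_nonneg ?_ fun b _ _ =>
      rcs0 _ (fun j => le_max_right _ _) b
    intro b hb
    rw [Finset.mem_compl]
    intro hbA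
    exact (Finset.mem_compl.mp (hAD hbA)) hb
  have f3 : ∑ b ∈ A, rcs νm b + ∑ b ∈ Aᶜ, rcs νm b = 2 * ∑ j, νm j := by
    rw [Finset.sum_add_sum_compl, rcs_total]
  have f4 : ∑ b ∈ A, rcs μ b = ∑ b ∈ A, rcs νp b - ∑ b ∈ A, rcs νm b := by
    rw [← Finset.sum_sub_distrib]
    refine Finset.sum_congr rfl fun b _ => ?_
    rcases b with s | i
    · simp only [rcs, Sum.elim_inl]
      rw [← Finset.sum_sub_distrib]
      exact Finset.sum_congr rfl fun i _ => hsplit _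
    · simp only [rcs, Sum.elim_inr]
      rw [← Finset.sum_sub_distrib]
      exact Finset.sum_congr rfl fun i _ => hsplit _
  have hwc : ∀ j, ∑ z, c j z * cellw Sᶜ Tᶜ z = 2 - ∑ z, c j z * cellw S T z := by
    intro j
    have : (2 : ℝ) = ∑ z, c j z * 2 := by rw [← Finset.sum_mul, c1 j]; ring
    rw [this, ← Finset.sum_sub_distrib]
    refine Finset.sum_congr rfl fun z _ => ?_
    rw [← mul_sub]
    congr 1
    simp only [cellw, Finset.mem_compl]
    by_cases h1 : z.1 ∈ T <;> by_cases h2 : z.2 ∈ S <;> simp [h1, h2] <;> norm_num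
  have f5 : ∑ j, νm j * ∑ z, c j z * cellw Sᶜ Tᶜ z
      = 2 * ∑ j, νm j - ∑ j, νm j * ∑ z, c j z * cellw S T z := by
    rw [Finset.mul_sum, ← Finset.sum_sub_distrib]
    refine Finset.sum_congr rfl fun j _ => ?_
    rw [hwc j]; ring
  have f6 : ∑ j, μ j * ∑ z, c j z * cellw S T z
      = ∑ j, νp j * ∑ z, c j z * cellw S T z - ∑ j, νm j * ∑ z, c j z * cellw S T z := by
    rw [← Finset.sum_sub_distrib]
    refine Finset.sum_congr rfl fun j _ => ?_
    rw [hsplit j]; ring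
  linarith

lemma maxSum_mono_of {ι : Type*} [Fintype ι] (x y : ι → ℝ)
    (h : ∀ A : Finset ι, ∃ A' : Finset ι, A'.card = A.card ∧ ∑ i ∈ A, x i ≤ ∑ i ∈ A', y i)
    (k : ℕ) : maxSum x k ≤ maxSum y k := by
  unfold maxSum
  have hbdd : BddAbove {s : ℝ | ∃ A : Finset ι, A.card = k ∧ s = ∑ i ∈ A, y i} := by
    apply Set.Finite.bddAbove
    refine (Set.finite_range (fun A : Finset ι => ∑ i ∈ A, y i)).subset ?_
    rintro s ⟨A, _, rfl⟩
    exact ⟨A, rfl⟩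
  by_cases hk : ∃ A : Finset ι, A.card = k
  · obtain ⟨A0, hA0⟩ := hk
    refine csSup_le ⟨_, A0, hA0, rfl⟩ ?_
    rintro s ⟨A, hA, rfl⟩
    obtain ⟨A', hA', hle⟩ := h A
    exact hle.trans (le_csSup hbdd ⟨A', hA'.trans hA, rfl⟩)
  · have e : ∀ z : ι → ℝ, {s : ℝ | ∃ A : Finset ι, A.card = k ∧ s = ∑ i ∈ A, z i} = ∅ := by
      intro z
      ext s
      simp only [Set.mem_ofPred_eq, Set.mem_empty_iff_false, iff_false]
      rintro ⟨A, hA, _⟩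
      exact hk ⟨A, hA⟩
    rw [e, e]

theorem sufficient_rank_three_different_dimensions (d1 d2 : ℕ) (hd1 : 2 ≤ d1) (hdd : d1 < d2)
    (C : Matrix (Fin d1 × Fin d2) (Fin d1 × Fin d2) ℂ) (hC : C.IsHermitian)
    (hrank : C.rank ≤ 3)
    (htr1 : (ptrace1 C).IsHermitian) (htr2 : (ptrace2 C).IsHermitian)
    -- `μ` lists the eigenvalues of `C` in decreasing order
    (μ : Fin (d1 * d2) → ℝ) (hμ : Antitone μ)
    (g : Fin (d1 * d2) ≃ Fin d1 × Fin d2) (hg : ∀ k, μ k = hC.eigenvalues (g k)) :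
    Majorizes (Sum.elim htr1.eigenvalues htr2.eigenvalues)
      (Sum.elim (fun s : Fin d2 => ∑ i : Fin d1, μ (finProdFinEquiv (i, s)))
                (fun j : Fin d1 => ∑ s : Fin d2, μ (finProdFinEquiv (j, s)))) := by

  obtain ⟨c', c0', c1', c2', hx', hy'⟩ := exists_weights C hC htr1 htr2
  let c : Fin (d1 * d2) → Fin d1 × Fin d2 → ℝ := fun j => c' (g j)
  have c0 : ∀ j z, 0 ≤ c j z := fun j z => c0' _ z
  have c1 : ∀ j, ∑ z, c j z = 1 := fun j => c1' _
  have c2 : ∀ z, ∑ j, c j z = 1 := fun z => (Equiv.sum_comp g (fun j => c' j z)).trans (c2' z)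
  have hre : ∀ z, ∑ j, hC.eigenvalues j * c' j z = ∑ j, μ j * c j z := by
    intro z
    rw [← Equiv.sum_comp g]
    exact Finset.sum_congr rfl fun j _ => by rw [hg j]
  simp_rw [hre] at hx' hy'
  have hcard : (Finset.univ.filter (fun j => μ j ≠ 0)).card ≤ 3 := by
    rw [hC.rank_eq_card_non_zero_eigs, Fintype.card_subtype] at hrank
    refine le_trans (le_of_eq ?_) hrank
    refine Finset.card_bij (fun j _ => g j) ?_ ?_ ?_
    · intro j hj
      simpa [hg j] using hj
    · intro a _ b _ h
      exact g.injective h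
    · intro b hb
      refine ⟨g.symm b, ?_, by simp⟩
      simpa [hg] using hb
  have hsum : ∀ (S : Finset (Fin d2)) (T : Finset (Fin d1)),
      ∑ s ∈ S, htr1.eigenvalues s + ∑ t ∈ T, htr2.eigenvalues t
        = ∑ j, μ j * ∑ z, c j z * cellw S T z := by
    intro S T
    simp_rw [hx', hy', Finset.mul_sum]
    rw [Finset.sum_comm (s := Finset.univ) (t := Finset.univ) (f := fun j z => _ * _)]
    rw [Fintype.sum_prod_type]
    simp only [cellw, mul_add, Finset.sum_add_distrib]
    congr 1
    · rw [Finset.sum_comm]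
      refine Finset.sum_congr rfl fun t _ => ?_
      rw [← Finset.univ_inter S, ← Finset.sum_ite_mem]
      refine Finset.sum_congr rfl fun s _ => ?_
      simp only [Finset.univ_inter]
      split_ifs <;> simp
    · rw [← Finset.univ_inter T, ← Finset.sum_ite_mem]
      refine Finset.sum_congr rfl fun t _ => ?_
      simp only [Finset.univ_inter]
      split_ifs <;> simp
  change Majorizes _ (rcs μ)
  refine ⟨maxSum_mono_of _ _ ?_, ?_⟩
  · intro A
    obtain ⟨A', hA', hle⟩ := scalar_main hd1 hdd c c0 c1 c2 A.toLeft A.toRight μ hμ hcard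
    refine ⟨A', by rw [hA', Finset.card_toLeft_add_card_toRight], ?_⟩
    rw [← hsum] at hle
    rw [← Finset.toLeft_disjSum_toRight (u := A), Finset.sum_disjSum]
    simpa using hle
  · rw [rcs_total, Fintype.sum_sum_type]
    simp only [Sum.elim_inl, Sum.elim_inr]
    rw [hsum Finset.univ Finset.univ, Finset.mul_sum]
    refine Finset.sum_congr rfl fun j _ => ?_
    have : ∑ z, c j z * cellw (Finset.univ : Finset (Fin d2)) (Finset.univ : Finset (Fin d1)) z
        = 2 := by
      simp only [cellw, Finset.mem_univ, if_true]
      rw [← Finset.sum_mul, c1 j]; norm_num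
    rw [this]; ring
end
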